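/- arXiv:2009.12086 — 2 statements merged into one kernel-verified Lean document; each statement's English description precedes it below -/
import Mathlib

section
/- Fix θ > 0 and let p(s,x,y) = (2π(1−e^{−2θs}))^{−1/2} exp(−(x − y e^{−θs})²/(2(1−e^{−2θs}))) be the Ornstein–Uhlenbeck (Mehler) transition kernel. Let f be a probability density on (0,∞), set 𝔢(λ) = ∫₀^∞ e^{−λs} f(s) ds for λ ≥ 0, and assume sup_{λ≥0} λ·𝔢(λ) < ∞. Then for every x, y ∈ ℝ, ∫₀^∞ p(s,x,y) f(s) ds = m(x) · Σ_{n=0}^∞ 𝔢(θn) Q_n(x) Q_n(y), where the series converges absolutely. -/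
open MeasureTheory Set Polynomial

/-- The Ornstein–Uhlenbeck (Mehler) transition kernel
`p(s,x,y) = (2π(1−e^{−2θs}))^{−1/2} exp(−(x − y e^{−θs})²/(2(1−e^{−2θs})))`. -/
noncomputable def ouKernel (θ s x y : ℝ) : ℝ :=
  (Real.sqrt (2 * Real.pi * (1 - Real.exp (-2 * θ * s))))⁻¹ *
    Real.exp (-(x - y * Real.exp (-θ * s)) ^ 2 / (2 * (1 - Real.exp (-2 * θ * s))))

/-- The standard Gaussian density `m(x) = (2π)^{−1/2} e^{−x²/2}`. -/
noncomputable def gauss (x : ℝ) : ℝ :=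
  (Real.sqrt (2 * Real.pi))⁻¹ * Real.exp (-x ^ 2 / 2)

/-- The normalized probabilists' Hermite polynomials `Qₙ(x) = Heₙ(x)/√(n!)`. -/
noncomputable def normHermite (n : ℕ) (x : ℝ) : ℝ :=
  (Polynomial.aeval x (Polynomial.hermite n)) / Real.sqrt (Nat.factorial n)

lemma cexp_hasSum (z : ℂ) : HasSum (fun n : ℕ => z ^ n / (n.factorial : ℂ)) (Complex.exp z) := by
  rw [Complex.exp_eq_exp_ℂ]; exact NormedSpace.expSeries_div_hasSum_exp z

lemma rexp_hasSum (z : ℝ) : HasSum (fun n : ℕ => z ^ n / (n.factorial : ℝ)) (Real.exp z) := by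
  rw [Real.exp_eq_exp_ℝ]; exact NormedSpace.expSeries_div_hasSum_exp z

lemma derivative_herm (n : ℕ) :
    derivative (hermite (n + 1)) = ((n : ℤ[X]) + 1) * hermite n := by
  induction n with
  | zero => simp [hermite_succ]
  | succ n ih =>
    rw [hermite_succ (n + 1), derivative_sub, derivative_mul, ih, derivative_mul]
    have h := hermite_succ n
    simp only [derivative_X, derivative_add, derivative_natCast, derivative_one]
    push_cast
    rw [h] at *
    ring

lemma herm_rec (n : ℕ) : hermite (n + 2) = X * hermite (n + 1) - ((n : ℤ[X]) + 1) * hermite n := by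
  rw [hermite_succ (n + 1), derivative_herm]

/-- the complex linear form `x + i z` -/
noncomputable def lin (x z : ℝ) : ℂ := (x : ℂ) + Complex.I * z

/-- the unnormalized gaussian weight -/
noncomputable def gw (z : ℝ) : ℂ := Complex.exp (-(z : ℂ) ^ 2 / 2)

lemma gw_norm (z : ℝ) : ‖gw z‖ = Real.exp (-z ^ 2 / 2) := by
  have : gw z = ((Real.exp (-z ^ 2 / 2) : ℝ) : ℂ) := by simp [gw]
  rw [this, Complex.norm_real, Real.norm_eq_abs, abs_of_pos (Real.exp_pos _)]

lemma lin_norm_sq (x z : ℝ) : ‖lin x z‖ ^ 2 = x ^ 2 + z ^ 2 := by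
  rw [← Complex.normSq_eq_norm_sq, Complex.normSq_apply]; simp [lin]; ring

@[fun_prop] lemma lin_cont (x : ℝ) : Continuous (lin x) := by unfold lin; fun_prop
@[fun_prop] lemma gw_cont : Continuous gw := by unfold gw; fun_prop

lemma lin_int (x : ℝ) (n : ℕ) : Integrable (fun z : ℝ => lin x z ^ n * gw z) := by
  have h := ((integrable_exp_neg_mul_sq (b := 1/4) (by norm_num)).const_mul
    ((n.factorial : ℝ) * Real.exp (1 + x ^ 2 / 4)))
  refine h.mono' (by fun_prop) (Filter.Eventually.of_forall fun z => ?_)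
  rw [norm_mul, norm_pow, gw_norm]
  have h1 := Real.pow_div_factorial_le_exp ‖lin x z‖ (norm_nonneg _) n
  have hn : (0 : ℝ) < n.factorial := by positivity
  rw [div_le_iff₀ hn] at h1
  have h2 : ‖lin x z‖ ≤ 1 + (x ^ 2 + z ^ 2) / 4 := by
    rw [← lin_norm_sq]; nlinarith [sq_nonneg (‖lin x z‖ - 2)]
  calc ‖lin x z‖ ^ n * Real.exp (-z ^ 2 / 2)
      ≤ (Real.exp (1 + (x ^ 2 + z ^ 2) / 4) * n.factorial) * Real.exp (-z ^ 2 / 2) := by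
        gcongr
        exact h1.trans (by gcongr)
    _ = n.factorial * (Real.exp (1 + (x ^ 2 + z ^ 2) / 4) * Real.exp (-z ^ 2 / 2)) := by ring
    _ = n.factorial * (Real.exp (1 + x ^ 2 / 4) * Real.exp (-(1/4) * z ^ 2)) := by
        rw [← Real.exp_add, ← Real.exp_add]; congr 2; ring
    _ = _ := by ring

lemma gw_integral : ∫ z : ℝ, gw z = (Real.sqrt (2 * Real.pi) : ℂ) := by
  have h := integral_gaussian (1/2)
  have e : ∀ z : ℝ, gw z = ((Real.exp (-(1/2) * z ^ 2) : ℝ) : ℂ) := by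
    intro z; simp only [gw]; push_cast; congr 1; ring
  simp_rw [e]
  rw [integral_complex_ofReal, h]
  congr 2; ring

lemma lin_hasDerivAt (x z : ℝ) : HasDerivAt (lin x) Complex.I z := by
  have h : HasDerivAt (fun z : ℝ => (z : ℂ)) 1 z := Complex.ofRealCLM.hasDerivAt
  have h2 := (h.const_mul Complex.I).const_add (x : ℂ)
  rw [mul_one] at h2
  exact h2

lemma gw_hasDerivAt (z : ℝ) : HasDerivAt gw (-(z : ℂ) * gw z) z := by
  have h : HasDerivAt (fun z : ℝ => (z : ℂ)) 1 z := Complex.ofRealCLM.hasDerivAt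
  have h2 := ((h.pow 2).neg.div_const 2).cexp
  unfold gw
  refine h2.congr_deriv ?_
  simp
  ring

lemma lin_ibp (x : ℝ) (n : ℕ) :
    ∫ z : ℝ, lin x z ^ (n + 1) * gw z
      = x * (∫ z : ℝ, lin x z ^ n * gw z) - n * ∫ z : ℝ, lin x z ^ (n - 1) * gw z := by
  have hd : ∀ z : ℝ, HasDerivAt (fun z : ℝ => lin x z ^ n * gw z)
      (Complex.I * (n * (lin x z ^ (n - 1) * gw z) + lin x z ^ (n + 1) * gw z
        - x * (lin x z ^ n * gw z))) z := by
    intro z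
    refine (((lin_hasDerivAt x z).pow n).mul (gw_hasDerivAt z)).congr_deriv ?_
    have hz : (z : ℂ) = -Complex.I * (lin x z - x) := by
      simp only [lin]; ring_nf; simp
    simp only [Pi.pow_apply]
    rw [hz]; ring
  have hi1 := (lin_int x (n - 1)).const_mul (n : ℂ)
  have hi2 := (lin_int x (n + 1))
  have hi3 := (lin_int x n).const_mul (x : ℂ)
  have := integral_eq_zero_of_hasDerivAt_of_integrable hd
    (((hi1.add hi2).sub hi3).const_mul Complex.I) (lin_int x n)
  rw [integral_const_mul, integral_sub (by exact hi1.add hi2) hi3, integral_add hi1 hi2,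
    integral_const_mul, integral_const_mul] at this
  have := (mul_eq_zero.mp this).resolve_left Complex.I_ne_zero
  linear_combination this

lemma herm_int (x : ℝ) (n : ℕ) :
    ∫ z : ℝ, lin x z ^ n * gw z
      = (Real.sqrt (2 * Real.pi) : ℂ) * ((Polynomial.aeval x (hermite n) : ℝ) : ℂ) := by
  induction n using Nat.twoStepInduction with
  | zero => simp [gw_integral]
  | one =>
    have := lin_ibp x 0
    simp only [gw_integral, pow_zero, one_mul, zero_add, Nat.cast_zero, zero_mul, sub_zero] at this
    rw [this]; simp [hermite_succ]; ring
  | more n ih1 ih2 =>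
    rw [lin_ibp x (n + 1), Nat.add_sub_cancel, ih1, ih2, herm_rec]
    simp
    ring

/-- Mehler kernel -/
noncomputable def meh (r x y : ℝ) : ℝ :=
  (Real.sqrt (1 - r ^ 2))⁻¹ *
    Real.exp ((2 * r * x * y - r ^ 2 * x ^ 2 - r ^ 2 * y ^ 2) / (2 * (1 - r ^ 2)))

lemma half_pow (a : ℝ) (ha : 0 ≤ a) : ((a : ℂ)) ^ (1 / 2 : ℂ) = (Real.sqrt a : ℂ) := by
  rw [Real.sqrt_eq_rpow, Complex.ofReal_cpow ha]; simp

lemma dbl_bound (r x y : ℝ) (h0 : 0 ≤ r) (z w : ℝ) :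
    Real.exp (r * (‖lin x z‖ * ‖lin y w‖)) * (‖gw z‖ * ‖gw w‖) ≤
      Real.exp (r * (x ^ 2 + y ^ 2) / 2) * (Real.exp (-((1 - r)/2) * z ^ 2) * 
        Real.exp (-((1 - r)/2) * w ^ 2)) := by
  rw [gw_norm, gw_norm, ← Real.exp_add, ← Real.exp_add, ← Real.exp_add, ← Real.exp_add,
    Real.exp_le_exp]
  have h1 := lin_norm_sq x z
  have h2 := lin_norm_sq y w
  have h3 : ‖lin x z‖ * ‖lin y w‖ ≤ (x ^ 2 + z ^ 2 + y ^ 2 + w ^ 2) / 2 := by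
    nlinarith [sq_nonneg (‖lin x z‖ - ‖lin y w‖)]
  have := mul_le_mul_of_nonneg_left h3 h0
  linarith

lemma dbl_bound_int (r x y : ℝ) (h1 : r < 1) : Integrable (fun p : ℝ × ℝ =>
    Real.exp (r * (x ^ 2 + y ^ 2) / 2) * (Real.exp (-((1 - r)/2) * p.1 ^ 2) * 
        Real.exp (-((1 - r)/2) * p.2 ^ 2))) (volume.prod volume) := by
  have := integrable_exp_neg_mul_sq (b := (1-r)/2) (by linarith)
  exact (this.mul_prod this).const_mul _

lemma dbl_integral (r x y : ℝ) (h0 : 0 ≤ r) (h1 : r < 1) :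
    ∫ p : ℝ × ℝ, Complex.exp (r * (lin x p.1 * lin y p.2)) * (gw p.1 * gw p.2)
      ∂(volume.prod volume) = ((2 * Real.pi * meh r x y : ℝ) : ℂ) := by
  have hr : 0 < 1 - r ^ 2 := by nlinarith
  have hint : Integrable (fun p : ℝ × ℝ =>
      Complex.exp (r * (lin x p.1 * lin y p.2)) * (gw p.1 * gw p.2)) (volume.prod volume) := by
    refine (dbl_bound_int r x y h1).mono' (by fun_prop) (Filter.Eventually.of_forall fun p => ?_)
    refine le_trans ?_ (dbl_bound r x y h0 p.1 p.2)
    rw [norm_mul, norm_mul]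
    gcongr
    rw [Complex.norm_exp]
    gcongr
    refine (Complex.re_le_norm _).trans ?_
    rw [norm_mul, norm_mul, Complex.norm_real, Real.norm_of_nonneg h0]
  rw [integral_prod _ hint]
  have inner : ∀ z : ℝ, ∫ w : ℝ, Complex.exp (r * (lin x z * lin y w)) * (gw z * gw w)
      = (Real.sqrt (2 * Real.pi) : ℂ) * Complex.exp ((-(((1 - r ^ 2)/2 : ℝ) : ℂ)) * (z : ℂ) ^ 2
        + (Complex.I * r * y - Complex.I * r ^ 2 * x) * z + (r * x * y - r ^ 2 * x ^ 2 / 2)) := by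
    intro z
    have h := integral_cexp_quadratic (b := -1/2) (by norm_num)
      (Complex.I * r * lin x z) (r * lin x z * y - z ^ 2 / 2)
    have e : ((Real.pi : ℂ) / -(-1/2)) = ((2 * Real.pi : ℝ) : ℂ) := by push_cast; ring
    rw [e, half_pow _ (by positivity)] at h
    calc _ = _ := by
          refine integral_congr_ae (Filter.Eventually.of_forall fun w => ?_)
          simp only [gw]
          rw [← Complex.exp_add, ← Complex.exp_add]
          congr 1
          simp only [lin]; ring
      _ = _ := h
      _ = _ := by
          congr 2
          have hI := Complex.I_sq
          simp only [lin]; push_cast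
          linear_combination ((r:ℂ) ^ 2 * x * Complex.I * z + r ^ 2 * z ^ 2 * (Complex.I ^ 2 - 1) / 2
            + r ^ 2 * x ^ 2 / 2) * hI
  simp_rw [inner]
  rw [integral_const_mul, integral_cexp_quadratic (by 
    rw [Complex.neg_re, Complex.ofReal_re]; linarith)]
  have e : ((Real.pi : ℂ) / -(-(((1 - r ^ 2)/2 : ℝ) : ℂ))) = ((2 * Real.pi / (1 - r ^ 2) : ℝ) : ℂ) := by
    push_cast; rw [neg_neg]; field_simp
  rw [e, half_pow _ (by positivity)]
  have e2 : (r * x * y - r ^ 2 * x ^ 2 / 2 : ℂ) - (Complex.I * r * y - Complex.I * r ^ 2 * x) ^ 2 /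
      (4 * -(((1 - r ^ 2)/2 : ℝ) : ℂ)) =
      (((2 * r * x * y - r ^ 2 * x ^ 2 - r ^ 2 * y ^ 2) / (2 * (1 - r ^ 2)) : ℝ) : ℂ) := by
    have : (1 - (r:ℂ) ^ 2) ≠ 0 := by exact_mod_cast hr.ne'
    have e3 : (Complex.I * r * y - Complex.I * r ^ 2 * x) ^ 2 = -(r * y - r ^ 2 * x : ℂ) ^ 2 := by
      ring_nf; simp only [Complex.I_sq]; ring
    rw [e3]
    push_cast
    field_simp
    ring
  rw [e2, ← Complex.ofReal_exp, ← Complex.ofReal_mul, ← Complex.ofReal_mul]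
  congr 1
  rw [meh, Real.sqrt_div (by positivity)]
  have := Real.mul_self_sqrt (show 0 ≤ 2 * Real.pi by positivity)
  rw [← mul_assoc, ← mul_div_assoc, this]
  ring

lemma normHermite_mul (n : ℕ) (x y : ℝ) : normHermite n x * normHermite n y =
    (Polynomial.aeval x (hermite n) * Polynomial.aeval y (hermite n)) / (n.factorial : ℝ) := by
  rw [normHermite, normHermite, div_mul_div_comm, Real.mul_self_sqrt (by positivity)]

lemma mehler (r x y : ℝ) (h0 : 0 ≤ r) (h1 : r < 1) :
    HasSum (fun n : ℕ => r ^ n * (normHermite n x * normHermite n y)) (meh r x y) := by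
  have key := hasSum_integral_of_dominated_convergence (μ := (volume.prod volume : Measure (ℝ × ℝ)))
    (F := fun (n : ℕ) (p : ℝ × ℝ) =>
      (r * (lin x p.1 * lin y p.2)) ^ n / (n.factorial : ℂ) * (gw p.1 * gw p.2))
    (f := fun p => Complex.exp (r * (lin x p.1 * lin y p.2)) * (gw p.1 * gw p.2))
    (fun n p => (r * (‖lin x p.1‖ * ‖lin y p.2‖)) ^ n / (n.factorial : ℝ) * (‖gw p.1‖ * ‖gw p.2‖))
    (fun n => by fun_prop)
    (fun n => Filter.Eventually.of_forall fun p => by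
      simp [abs_of_nonneg h0])
    (Filter.Eventually.of_forall fun p => ((rexp_hasSum _).mul_right _).summable)
    (by
      simp_rw [((rexp_hasSum _).mul_right _).tsum_eq]
      refine (dbl_bound_int r x y h1).mono' (by fun_prop) (Filter.Eventually.of_forall fun p => ?_)
      rw [Real.norm_of_nonneg (by positivity)]
      exact dbl_bound r x y h0 p.1 p.2)
    (Filter.Eventually.of_forall fun p => ((cexp_hasSum _).mul_right _))
  rw [dbl_integral r x y h0 h1] at key
  have hF : ∀ n : ℕ, ∫ p : ℝ × ℝ,
      (r * (lin x p.1 * lin y p.2)) ^ n / (n.factorial : ℂ) * (gw p.1 * gw p.2) ∂(volume.prod volume)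
      = ((2 * Real.pi * (r ^ n * (normHermite n x * normHermite n y)) : ℝ) : ℂ) := by
    intro n
    have e : ∀ p : ℝ × ℝ, (r * (lin x p.1 * lin y p.2)) ^ n / (n.factorial : ℂ) * (gw p.1 * gw p.2)
      = (r ^ n / (n.factorial : ℂ)) * ((lin x p.1 ^ n * gw p.1) * (lin y p.2 ^ n * gw p.2)) := by
      intro p; ring
    simp_rw [e]
    rw [integral_const_mul, integral_prod_mul (fun z => lin x z ^ n * gw z)
      (fun z => lin y z ^ n * gw z), herm_int, herm_int, normHermite_mul]
    have := Real.mul_self_sqrt (show 0 ≤ 2 * Real.pi by positivity)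
    generalize Real.sqrt (2 * Real.pi) = q at *
    rw [← this]
    push_cast
    ring
  simp_rw [hF] at key
  have key2 := (Complex.hasSum_ofReal.mp key)
  exact (hasSum_mul_left_iff (by positivity)).mp key2

lemma summable_diag (x : ℝ) :
    Summable (fun n : ℕ => normHermite n x * normHermite n x / ((n : ℝ) + 1)) := by
  have hg : IntervalIntegrable (fun r : ℝ => Real.exp (x ^ 2) * (1 - r) ^ (-(1/2) : ℝ)) volume 0 1 := by
    have := (intervalIntegral.intervalIntegrable_rpow' (a := 1) (b := 0) (r := -(1/2))
      (by norm_num)).comp_sub_left 1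
    simp only [sub_self, sub_zero] at this
    exact this.const_mul _
  refine summable_of_sum_range_le (c := ∫ r in (0:ℝ)..1, Real.exp (x ^ 2) * (1 - r) ^ (-(1/2) : ℝ))
    (fun n => div_nonneg (mul_self_nonneg _) (by positivity)) (fun N => ?_)
  have e : ∑ n ∈ Finset.range N, normHermite n x * normHermite n x / ((n : ℝ) + 1)
      = ∫ r in (0:ℝ)..1, ∑ n ∈ Finset.range N, r ^ n * (normHermite n x * normHermite n x) := by
    rw [intervalIntegral.integral_finsetSum]
    · refine Finset.sum_congr rfl fun n _ => ?_
      rw [intervalIntegral.integral_mul_const, integral_pow]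
      simp
      ring
    · intro n _
      exact (by fun_prop : Continuous fun r : ℝ =>
        r ^ n * (normHermite n x * normHermite n x)).intervalIntegrable _ _
  rw [e]
  refine intervalIntegral.integral_mono_on_of_le_Ioo zero_le_one
    ((by fun_prop : Continuous fun r : ℝ => ∑ n ∈ Finset.range N,
        r ^ n * (normHermite n x * normHermite n x)).intervalIntegrable _ _) hg ?_
  intro r hr
  obtain ⟨h0, h1⟩ := hr
  have hm := mehler r x x h0.le h1
  refine (sum_le_hasSum _ (fun n _ => mul_nonneg (pow_nonneg h0.le _) (mul_self_nonneg _)) hm).trans ?_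
  have hr2 : 0 < 1 - r ^ 2 := by nlinarith
  rw [meh, mul_comm]
  have hx := sq_nonneg x
  gcongr
  · rw [div_le_iff₀ (by linarith)]
    nlinarith [mul_nonneg hx (sub_nonneg.mpr h1.le)]
  · rw [Real.rpow_neg (by linarith), ← Real.sqrt_eq_rpow]
    have : 0 < 1 - r := by linarith
    gcongr
    nlinarith

/-- **Spectral decomposition of the subordinated Ornstein–Uhlenbeck kernel.**
Let `θ > 0`, let `f` be a probability density on `(0,∞)`, set
`𝔢(λ) = ∫₀^∞ e^{−λs} f(s) ds` and assume `sup_{λ ≥ 0} λ·𝔢(λ) < ∞`. Then for all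
`x, y ∈ ℝ`, `∫₀^∞ p(s,x,y) f(s) ds = m(x) Σₙ 𝔢(θn) Qₙ(x) Qₙ(y)`, the series
converging absolutely. -/
theorem stmt3 (θ : ℝ) (hθ : 0 < θ)
    (f : ℝ → ℝ) (hfmeas : Measurable f) (hf0 : ∀ s, 0 ≤ f s)
    (hf1 : ∫ s in Set.Ioi (0:ℝ), f s = 1)
    (hbd : ∃ C : ℝ, ∀ lam : ℝ, 0 ≤ lam →
      lam * ∫ s in Set.Ioi (0:ℝ), Real.exp (-lam * s) * f s ≤ C) :
    ∀ x y : ℝ,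
      (Summable fun n : ℕ =>
        |(∫ s in Set.Ioi (0:ℝ), Real.exp (-(θ * n) * s) * f s) *
          normHermite n x * normHermite n y|) ∧
      ∫ s in Set.Ioi (0:ℝ), ouKernel θ s x y * f s
        = gauss x * ∑' n : ℕ,
            (∫ s in Set.Ioi (0:ℝ), Real.exp (-(θ * n) * s) * f s) *
              normHermite n x * normHermite n y := by
  intro x y
  obtain ⟨C, hC⟩ := hbd
  have hfi : IntegrableOn f (Set.Ioi 0) := by
    by_contra h
    rw [integral_undef h] at hf1
    exact zero_ne_one hf1
  have hei : ∀ n : ℕ, IntegrableOn (fun s => Real.exp (-(θ * n) * s) * f s) (Set.Ioi 0) := by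
    intro n
    refine Integrable.mono' hfi (by fun_prop) ?_
    filter_upwards [ae_restrict_mem measurableSet_Ioi] with s hs
    have hs : 0 < s := hs
    rw [norm_mul, Real.norm_of_nonneg (hf0 s), Real.norm_of_nonneg (Real.exp_pos _).le]
    refine mul_le_of_le_one_left (hf0 s) (Real.exp_le_one_iff.mpr ?_)
    have : 0 ≤ θ * n * s := by positivity
    linarith
  have he0 : ∀ n : ℕ, 0 ≤ ∫ s in Set.Ioi (0:ℝ), Real.exp (-(θ * n) * s) * f s := fun n =>
    integral_nonneg fun s => mul_nonneg (Real.exp_pos _).le (hf0 s)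
  have he1 : ∀ n : ℕ, ∫ s in Set.Ioi (0:ℝ), Real.exp (-(θ * n) * s) * f s ≤ 1 := by
    intro n
    rw [← hf1]
    refine setIntegral_mono_on (hei n) hfi measurableSet_Ioi fun s hs => ?_
    have hs : 0 < s := hs
    refine mul_le_of_le_one_left (hf0 s) (Real.exp_le_one_iff.mpr ?_)
    have : 0 ≤ θ * n * s := by positivity
    linarith
  have heb : ∀ n : ℕ, ∫ s in Set.Ioi (0:ℝ), Real.exp (-(θ * n) * s) * f s
      ≤ (C / θ + 1) / ((n : ℝ) + 1) := by
    intro n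
    have h1 := hC (θ * n) (by positivity)
    have h2 := he1 n
    set e := ∫ s in Set.Ioi (0:ℝ), Real.exp (-(θ * n) * s) * f s
    rw [le_div_iff₀ (by positivity)]
    have : n * e ≤ C / θ := by
      rw [le_div_iff₀ hθ]; linarith
    linarith
  have hsum : Summable fun n : ℕ =>
        |(∫ s in Set.Ioi (0:ℝ), Real.exp (-(θ * n) * s) * f s) *
          normHermite n x * normHermite n y| := by
    refine Summable.of_nonneg_of_le (fun n => abs_nonneg _) (fun n => ?_)
      (((summable_diag x).add (summable_diag y)).mul_left (C / θ + 1))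
    rw [mul_assoc, abs_mul, abs_of_nonneg (he0 n)]
    have h3 : |normHermite n x * normHermite n y| ≤
        normHermite n x * normHermite n x + normHermite n y * normHermite n y := by
      rw [abs_le]
      constructor <;> nlinarith [sq_nonneg (normHermite n x + normHermite n y),
        sq_nonneg (normHermite n x - normHermite n y), sq_nonneg (normHermite n x),
        sq_nonneg (normHermite n y)]
    calc _ ≤ (C / θ + 1) / ((n : ℝ) + 1) * (normHermite n x * normHermite n x
            + normHermite n y * normHermite n y) :=
          mul_le_mul (heb n) h3 (abs_nonneg _) ((he0 n).trans (heb n))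
      _ = _ := by ring
  refine ⟨hsum, ?_⟩
  have hs := hasSum_integral_of_summable_integral_norm (μ := volume.restrict (Set.Ioi (0:ℝ)))
    (F := fun (n : ℕ) s => Real.exp (-(θ * n) * s) * f s * (normHermite n x * normHermite n y))
    (fun n => (hei n).mul_const _)
    (by
      refine hsum.congr fun n => ?_
      simp_rw [norm_mul, Real.norm_of_nonneg (hf0 _), Real.norm_of_nonneg (Real.exp_pos _).le]
      rw [integral_mul_const, mul_assoc, abs_mul, abs_of_nonneg (he0 n), abs_mul]
      rfl)
  simp_rw [integral_mul_const, ← mul_assoc] at hs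
  rw [hs.tsum_eq, ← integral_const_mul]
  refine setIntegral_congr_fun measurableSet_Ioi fun s hs => ?_
  have hs : 0 < s := hs
  have hr0 : 0 ≤ Real.exp (-θ * s) := (Real.exp_pos _).le
  have hr1 : Real.exp (-θ * s) < 1 := by
    rw [Real.exp_lt_one_iff]; nlinarith
  have hm := (mehler _ x y hr0 hr1).mul_left (f s)
  have e : ∀ n : ℕ, Real.exp (-(θ * n) * s) * f s * normHermite n x * normHermite n y
      = f s * (Real.exp (-θ * s) ^ n * (normHermite n x * normHermite n y)) := by
    intro n
    rw [← Real.exp_nat_mul]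
    rw [show (n : ℝ) * (-θ * s) = -(θ * n) * s by ring]
    ring
  simp only [e]
  rw [hm.tsum_eq, ouKernel, gauss, meh]
  have e2 : Real.exp (-2 * θ * s) = Real.exp (-θ * s) ^ 2 := by
    rw [← Real.exp_nat_mul]; congr 1; push_cast; ring
  rw [e2]
  set r := Real.exp (-θ * s)
  have hr : 0 < 1 - r ^ 2 := by nlinarith
  rw [Real.sqrt_mul (by positivity), mul_inv]
  have e3 : Real.exp (-(x - y * r) ^ 2 / (2 * (1 - r ^ 2))) = Real.exp (-x ^ 2 / 2) *
      Real.exp ((2 * r * x * y - r ^ 2 * x ^ 2 - r ^ 2 * y ^ 2) / (2 * (1 - r ^ 2))) := by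
    rw [← Real.exp_add]; congr 1; field_simp; ring
  rw [e3]
  ring
end

section
/- Let Φ : (0,∞) → (0,∞) be regularly varying at 0⁺ with index α ∈ (0,1), i.e. for every c > 0, lim_{z→0⁺} Φ(cz)/Φ(z) = c^α. Fix λ > 0 and let g : (0,∞) → [0,∞) be nonincreasing with ∫₀^∞ e^{−zt} g(t) dt = Φ(z)/(z(λ + Φ(z))) for all z > 0. Then g is regularly varying at infinity with index −α: for every c > 0, lim_{t→+∞} g(ct)/g(t) = c^{−α}. -/
open MeasureTheory Set Filter

lemma karamata_aux {ι : Type*} (l : Filter ι) (μ : Measure ℝ) (X : ℝ → ℝ) (hX : Measurable X)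
    (hX01 : ∀ᵐ u ∂μ, X u ∈ Icc (0:ℝ) 1) (W : ι → ℝ → ℝ) (W0 : ℝ → ℝ)
    (hW : ∀ᶠ i in l, Integrable (W i) μ ∧ ∀ᵐ u ∂μ, 0 ≤ W i u)
    (hW0 : Integrable W0 μ ∧ ∀ᵐ u ∂μ, 0 ≤ W0 u)
    (hlim : ∀ n : ℕ, Tendsto (fun i => ∫ u, X u ^ n * W i u ∂μ) l
      (nhds (∫ u, X u ^ n * W0 u ∂μ)))
    (f : ℝ → ℝ) (hf : Continuous f) :
    Tendsto (fun i => ∫ u, f (X u) * W i u ∂μ) l (nhds (∫ u, f (X u) * W0 u ∂μ)) := by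
  -- integrability
  have hint : ∀ h : ℝ → ℝ, Continuous h → ∀ V : ℝ → ℝ, Integrable V μ →
      Integrable (fun u => h (X u) * V u) μ := by
    intro h hh V hV
    obtain ⟨C, hC⟩ := (isCompact_Icc (a := (0:ℝ)) (b := 1)).exists_bound_of_continuousOn
      hh.continuousOn
    refine hV.bdd_mul (c := C) (hh.measurable.comp hX).aestronglyMeasurable ?_
    filter_upwards [hX01] with u hu using hC _ hu
  have hpoly : ∀ p : Polynomial ℝ, ∀ V : ℝ → ℝ, Integrable V μ →
      ∫ u, p.eval (X u) * V u ∂μ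
        = ∑ n ∈ Finset.range (p.natDegree + 1), p.coeff n * ∫ u, X u ^ n * V u ∂μ := by
    intro p V hV
    simp_rw [Polynomial.eval_eq_sum_range, Finset.sum_mul]
    rw [integral_finsetSum]
    · refine Finset.sum_congr rfl fun n _ => ?_
      rw [← integral_const_mul]
      simp_rw [mul_assoc]
    · intro n _
      exact hint (fun x => p.coeff n * x ^ n) (by fun_prop) V hV
  have hpl : ∀ p : Polynomial ℝ, Tendsto (fun i => ∫ u, p.eval (X u) * W i u ∂μ) l
      (nhds (∫ u, p.eval (X u) * W0 u ∂μ)) := by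
    intro p
    rw [hpoly p W0 hW0.1]
    refine Tendsto.congr' (f₁ := fun i => ∑ n ∈ Finset.range (p.natDegree + 1),
      p.coeff n * ∫ u, X u ^ n * W i u ∂μ) ?_ ?_
    · filter_upwards [hW] with i hi
      exact (hpoly p (W i) hi.1).symm
    · exact tendsto_finsetSum _ fun n _ => (hlim n).const_mul _
  have hclose : ∀ p : Polynomial ℝ, ∀ δ : ℝ, (∀ x ∈ Icc (0:ℝ) 1, |p.eval x - f x| < δ) →
      ∀ V : ℝ → ℝ, Integrable V μ → (∀ᵐ u ∂μ, 0 ≤ V u) →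
      |∫ u, p.eval (X u) * V u ∂μ - ∫ u, f (X u) * V u ∂μ| ≤ δ * ∫ u, V u ∂μ := by
    intro p δ hp V hV hV0
    rw [← integral_sub (hint (fun x => p.eval x) p.continuous V hV) (hint f hf V hV),
      ← integral_const_mul, ← Real.norm_eq_abs]
    refine norm_integral_le_of_norm_le (hV.const_mul δ) ?_
    filter_upwards [hX01, hV0] with u hu hu0
    rw [← sub_mul, norm_mul, Real.norm_eq_abs, Real.norm_eq_abs, abs_of_nonneg hu0]
    exact mul_le_mul_of_nonneg_right (hp _ hu).le hu0
  have hmass : Tendsto (fun i => ∫ u, W i u ∂μ) l (nhds (∫ u, W0 u ∂μ)) := by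
    simpa using hlim 0
  set M := ∫ u, W0 u ∂μ with hM
  have hM0 : 0 ≤ M := integral_nonneg_of_ae hW0.2
  rw [Metric.tendsto_nhds]
  intro ε hε
  have hδ : 0 < ε / (3 * (M + 1)) := by positivity
  obtain ⟨p, hp⟩ := exists_polynomial_near_of_continuousOn 0 1 f hf.continuousOn _ hδ
  filter_upwards [hW, hmass.eventually (gt_mem_nhds (show M < M + 1 by linarith)),
    (Metric.tendsto_nhds.1 (hpl p)) (ε / 3) (by positivity)] with i hi hi2 hi3
  have h1 := hclose p _ hp (W i) hi.1 hi.2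
  have h2 := hclose p _ hp W0 hW0.1 hW0.2
  rw [Real.dist_eq] at hi3 ⊢
  have e : ε / (3 * (M + 1)) * (M + 1) = ε / 3 := by field_simp
  have h1' : ε / (3 * (M + 1)) * ∫ u, W i u ∂μ < ε / 3 := by
    rw [← e]; exact mul_lt_mul_of_pos_left hi2 hδ
  have h2' : ε / (3 * (M + 1)) * M < ε / 3 := by
    rw [← e]; exact mul_lt_mul_of_pos_left (by linarith) hδ
  rw [abs_le] at h1 h2
  rw [abs_lt] at hi3 ⊢
  constructor <;> linarith [h1.1, h1.2, h2.1, h2.2, hi3.1, hi3.2]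

lemma bump_integrable (f : ℝ → ℝ) (hf : Continuous f) (V : ℝ → ℝ) (hV : IntegrableOn V (Ioi 0)) :
    IntegrableOn (fun u => f (Real.exp (-u)) * V u) (Ioi 0) := by
  obtain ⟨C, hC⟩ := (isCompact_Icc (a := (0:ℝ)) (b := 1)).exists_bound_of_continuousOn
    hf.continuousOn
  refine Integrable.bdd_mul (c := C) hV (by fun_prop) ?_
  filter_upwards [ae_restrict_mem measurableSet_Ioi] with u hu
  exact hC _ ⟨(Real.exp_pos _).le, Real.exp_le_one_iff.2 (by simpa using (le_of_lt hu))⟩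

lemma exp_neg_intOn : IntegrableOn (fun u : ℝ => Real.exp (-u)) (Ioi 0) :=
  integrableOn_exp_neg_Ioi 0

lemma exists_bump (a b : ℝ) (ha : 0 < a) (hab : a < b) :
    ∃ f : ℝ → ℝ, Continuous f ∧ (∀ x, 0 ≤ f x) ∧
      (∀ u, f (Real.exp (-u)) ≠ 0 → a ≤ u ∧ u ≤ b) ∧
      0 < ∫ u in Ioi (0:ℝ), f (Real.exp (-u)) * Real.exp (-u) := by
  set f : ℝ → ℝ := fun x => max 0 ((x - Real.exp (-b)) * (Real.exp (-a) - x)) with hfdef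
  have hf : Continuous f := by fun_prop
  have hf0 : ∀ x, 0 ≤ f x := fun x => le_max_left _ _
  have hba : Real.exp (-b) < Real.exp (-a) := Real.exp_lt_exp.2 (by linarith)
  refine ⟨f, hf, hf0, ?_, ?_⟩
  · intro u hu
    have hpos : 0 < (Real.exp (-u) - Real.exp (-b)) * (Real.exp (-a) - Real.exp (-u)) := by
      by_contra h
      exact hu (max_eq_left (not_lt.1 h))
    rcases mul_pos_iff.1 hpos with ⟨h1, h2⟩ | ⟨h1, h2⟩
    · have h1' := Real.exp_lt_exp.1 (sub_pos.1 h1)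
      have h2' := Real.exp_lt_exp.1 (sub_pos.1 h2)
      constructor <;> linarith
    · linarith
  · rw [setIntegral_pos_iff_support_of_nonneg_ae]
    · have hsub : Ioo a b ⊆ (Function.support fun u => f (Real.exp (-u)) * Real.exp (-u)) ∩ Ioi 0 := by
        intro u hu
        refine ⟨?_, ha.trans hu.1⟩
        have h1 : Real.exp (-b) < Real.exp (-u) := Real.exp_lt_exp.2 (by linarith [hu.2])
        have h2 : Real.exp (-u) < Real.exp (-a) := Real.exp_lt_exp.2 (by linarith [hu.1])
        have : 0 < f (Real.exp (-u)) :=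
          lt_max_of_lt_right (mul_pos (sub_pos.2 h1) (sub_pos.2 h2))
        exact (mul_pos this (Real.exp_pos _)).ne'
      refine lt_of_lt_of_le ?_ (measure_mono hsub)
      simpa using hab
    · exact ae_of_all _ fun u => mul_nonneg (hf0 _) (Real.exp_pos _).le
    · exact bump_integrable f hf _ exp_neg_intOn

lemma bump_le (f : ℝ → ℝ) (hf : Continuous f) (hf0 : ∀ x, 0 ≤ f x) (a b : ℝ)
    (hsupp : ∀ u, f (Real.exp (-u)) ≠ 0 → a ≤ u ∧ u ≤ b) (V V' : ℝ → ℝ)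
    (hV : IntegrableOn (fun u => Real.exp (-u) * V u) (Ioi 0))
    (hV' : IntegrableOn (fun u => Real.exp (-u) * V' u) (Ioi 0))
    (hle : ∀ u, 0 < u → a ≤ u → u ≤ b → V u ≤ V' u) :
    ∫ u in Ioi (0:ℝ), f (Real.exp (-u)) * (Real.exp (-u) * V u) ≤
      ∫ u in Ioi (0:ℝ), f (Real.exp (-u)) * (Real.exp (-u) * V' u) := by
  refine setIntegral_mono_on (bump_integrable f hf _ hV) (bump_integrable f hf _ hV')
    measurableSet_Ioi ?_
  intro u hu
  by_cases h : f (Real.exp (-u)) = 0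
  · simp [h]
  · have h2 := hsupp u h
    exact mul_le_mul_of_nonneg_left (mul_le_mul_of_nonneg_left (hle u hu h2.1 h2.2)
      (Real.exp_pos _).le) (hf0 _)

lemma bump_const (f : ℝ → ℝ) (m : ℝ) :
    ∫ u in Ioi (0:ℝ), f (Real.exp (-u)) * (Real.exp (-u) * m) =
      m * ∫ u in Ioi (0:ℝ), f (Real.exp (-u)) * Real.exp (-u) := by
  rw [← integral_const_mul]
  congr 1; ext u; ring

lemma lap_scale (g H : ℝ → ℝ) (hH : ∀ z, 0 < z → 0 < H z)
    (hL : ∀ z : ℝ, 0 < z → ∫ t in Ioi (0:ℝ), Real.exp (-z * t) * g t = H z / z)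
    (t k : ℝ) (ht : 0 < t) (hk : 0 < k) :
    IntegrableOn (fun u => Real.exp (-(k * u)) * g (t * u)) (Ioi 0) ∧
    ∫ u in Ioi (0:ℝ), Real.exp (-(k * u)) * g (t * u) = H (k * (1 / t)) / k := by
  have hz : 0 < k * (1 / t) := by positivity
  have hfun : (fun u => Real.exp (-(k * u)) * g (t * u)) =
      fun u => (fun s => Real.exp (-(k * (1 / t)) * s) * g s) (t * u) := by
    ext u
    have : -(k * (1 / t)) * (t * u) = -(k * u) := by field_simp
    simp only [this]
  have hne : ∫ s in Ioi (0:ℝ), Real.exp (-(k * (1 / t)) * s) * g s ≠ 0 := by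
    rw [hL _ hz]; exact (div_pos (hH _ hz) hz).ne'
  constructor
  · rw [hfun, integrableOn_Ioi_comp_mul_left_iff (fun s => Real.exp (-(k * (1 / t)) * s) * g s) _ ht, mul_zero]
    exact Integrable.of_integral_ne_zero hne
  · rw [hfun, integral_comp_mul_left_Ioi (fun s => Real.exp (-(k * (1 / t)) * s) * g s) _ ht, mul_zero, hL _ hz, smul_eq_mul]
    field_simp

lemma tauber (g H : ℝ → ℝ) (α : ℝ) (hα : α ∈ Set.Ioo (0:ℝ) 1)
    (hH : ∀ z, 0 < z → 0 < H z)
    (hg0 : ∀ t : ℝ, 0 < t → 0 ≤ g t) (hgmono : AntitoneOn g (Set.Ioi 0))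
    (hL : ∀ z : ℝ, 0 < z → ∫ t in Ioi (0:ℝ), Real.exp (-z * t) * g t = H z / z)
    (hrv : ∀ c : ℝ, 0 < c →
      Tendsto (fun t => H (c * (1 / t)) / H (1 / t)) atTop (nhds (c ^ α))) :
    Tendsto (fun t => g t / H (1 / t)) atTop (nhds (1 / Real.Gamma (1 - α))) := by
  have hα1 : 0 < 1 - α := by linarith [hα.2]
  set Γ := Real.Gamma (1 - α) with hΓ
  have hΓ0 : 0 < Γ := Real.Gamma_pos_of_pos hα1
  have hgam : ∀ k : ℝ, 0 < k → ∫ u in Ioi (0:ℝ), Real.exp (-(k * u)) * (u ^ (-α) / Γ) =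
      k ^ α / k := by
    intro k hk
    have h := Real.integral_rpow_mul_exp_neg_mul_Ioi hα1 hk
    have e : ∀ u : ℝ, Real.exp (-(k * u)) * (u ^ (-α) / Γ) =
        Γ⁻¹ * (u ^ (1 - α - 1) * Real.exp (-(k * u))) := by
      intro u
      rw [show 1 - α - 1 = -α by ring]; field_simp
    simp_rw [e]
    rw [integral_const_mul, h, ← hΓ, one_div, Real.inv_rpow hk.le, Real.rpow_sub hk, Real.rpow_one]
    field_simp
  have hW0 : IntegrableOn (fun u => Real.exp (-u) * (u ^ (-α) / Γ)) (Ioi 0) := by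
    refine Integrable.of_integral_ne_zero ?_
    have := hgam 1 one_pos
    simp only [one_mul] at this
    rw [this]; simp
  have hWi : ∀ t, 0 < t → IntegrableOn (fun u => Real.exp (-u) * (g (t * u) / H (1 / t))) (Ioi 0) := by
    intro t ht
    have := (lap_scale g H hH hL t 1 ht one_pos).1.div_const (H (1 / t))
    simpa [mul_div_assoc, IntegrableOn] using this
  have key : ∀ f : ℝ → ℝ, Continuous f → Tendsto
      (fun t => ∫ u in Ioi (0:ℝ), f (Real.exp (-u)) * (Real.exp (-u) * (g (t * u) / H (1 / t))))
      atTop (nhds (∫ u in Ioi (0:ℝ), f (Real.exp (-u)) * (Real.exp (-u) * (u ^ (-α) / Γ)))) := by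
    intro f hf
    refine karamata_aux atTop (volume.restrict (Ioi 0)) (fun u => Real.exp (-u)) (by fun_prop) ?_
      (fun t u => Real.exp (-u) * (g (t * u) / H (1 / t)))
      (fun u => Real.exp (-u) * (u ^ (-α) / Γ)) ?_ ⟨hW0, ?_⟩ ?_ f hf
    · filter_upwards [ae_restrict_mem measurableSet_Ioi] with u hu
      exact ⟨(Real.exp_pos _).le, Real.exp_le_one_iff.2 (by simpa using (le_of_lt hu))⟩
    · filter_upwards [eventually_gt_atTop 0] with t ht
      refine ⟨hWi t ht, ?_⟩
      filter_upwards [ae_restrict_mem measurableSet_Ioi] with u hu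
      exact mul_nonneg (Real.exp_pos _).le (div_nonneg (hg0 _ (mul_pos ht hu))
        (hH _ (by positivity)).le)
    · filter_upwards [ae_restrict_mem measurableSet_Ioi] with u hu
      have : (0:ℝ) < u := hu
      positivity
    · intro n
      have hk : (0:ℝ) < n + 1 := by positivity
      have ee : ∀ u : ℝ, ∀ y : ℝ, Real.exp (-u) ^ n * (Real.exp (-u) * y) =
          Real.exp (-((n + 1 : ℝ) * u)) * y := by
        intro u y
        rw [← mul_assoc, ← pow_succ, ← Real.exp_nat_mul]
        congr 2; push_cast; ring
      simp_rw [ee]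
      rw [hgam _ hk]
      refine ((hrv _ hk).div_const ((n:ℝ) + 1)).congr' ?_
      filter_upwards [eventually_gt_atTop 0] with t ht
      have h := (lap_scale g H hH hL t _ ht hk).2
      simp_rw [← mul_div_assoc]
      rw [integral_div, h, div_right_comm, mul_div_assoc]
  have hconst : ∀ m : ℝ, IntegrableOn (fun u => Real.exp (-u) * m) (Ioi 0) :=
    fun m => exp_neg_intOn.mul_const m
  have hcont : Tendsto (fun a : ℝ => a ^ (-α) / Γ) (nhds 1) (nhds (1 / Γ)) := by
    have : ContinuousAt (fun a : ℝ => a ^ (-α) / Γ) 1 :=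
      (Real.continuousAt_rpow_const 1 (-α) (Or.inl one_ne_zero)).div_const Γ
    simpa [ContinuousAt] using this
  rw [tendsto_order]
  constructor
  · intro r hr
    have h1 : ∀ᶠ b : ℝ in nhdsWithin 1 (Ioi 1), r < b ^ (-α) / Γ ∧ 1 < b :=
      ((hcont.mono_left nhdsWithin_le_nhds).eventually (lt_mem_nhds hr)).and self_mem_nhdsWithin
    obtain ⟨b, hb, hb1⟩ := h1.exists
    obtain ⟨f, hf, hf0, hsupp, hI⟩ := exists_bump 1 b one_pos hb1
    set I := ∫ u in Ioi (0:ℝ), f (Real.exp (-u)) * Real.exp (-u) with hIdef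
    have hJ : b ^ (-α) / Γ * I ≤
        ∫ u in Ioi (0:ℝ), f (Real.exp (-u)) * (Real.exp (-u) * (u ^ (-α) / Γ)) := by
      rw [hIdef, ← bump_const]
      refine bump_le f hf hf0 1 b hsupp _ _ (hconst _) hW0 ?_
      intro u hu _ hub
      exact div_le_div_of_nonneg_right
        (Real.rpow_le_rpow_of_nonpos hu hub (by linarith [hα.1])) hΓ0.le
    have hlt : r * I < ∫ u in Ioi (0:ℝ), f (Real.exp (-u)) * (Real.exp (-u) * (u ^ (-α) / Γ)) :=
      lt_of_lt_of_le (mul_lt_mul_of_pos_right hb hI) hJ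
    filter_upwards [(key f hf).eventually (lt_mem_nhds hlt), eventually_gt_atTop 0] with t h ht
    have h2 : ∫ u in Ioi (0:ℝ), f (Real.exp (-u)) * (Real.exp (-u) * (g (t * u) / H (1 / t))) ≤
        g t / H (1 / t) * I := by
      rw [hIdef, ← bump_const]
      refine bump_le f hf hf0 1 b hsupp _ _ (hWi t ht) (hconst _) ?_
      intro u hu h1u _
      exact div_le_div_of_nonneg_right (hgmono (mem_Ioi.2 ht) (mem_Ioi.2 (mul_pos ht hu))
        (by nlinarith)) (hH _ (by positivity)).le
    exact lt_of_mul_lt_mul_right (h.trans_le h2) hI.le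
  · intro r hr
    have h1 : ∀ᶠ a : ℝ in nhdsWithin 1 (Iio 1), (a ^ (-α) / Γ < r ∧ 0 < a) ∧ a < 1 :=
      (((hcont.mono_left nhdsWithin_le_nhds).eventually (gt_mem_nhds hr)).and
        (nhdsWithin_le_nhds (lt_mem_nhds one_pos))).and self_mem_nhdsWithin
    obtain ⟨a, ⟨ha, ha0⟩, ha1⟩ := h1.exists
    obtain ⟨f, hf, hf0, hsupp, hI⟩ := exists_bump a 1 ha0 ha1
    set I := ∫ u in Ioi (0:ℝ), f (Real.exp (-u)) * Real.exp (-u) with hIdef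
    have hJ : ∫ u in Ioi (0:ℝ), f (Real.exp (-u)) * (Real.exp (-u) * (u ^ (-α) / Γ)) ≤
        a ^ (-α) / Γ * I := by
      rw [hIdef, ← bump_const]
      refine bump_le f hf hf0 a 1 hsupp _ _ hW0 (hconst _) ?_
      intro u hu hau _
      exact div_le_div_of_nonneg_right
        (Real.rpow_le_rpow_of_nonpos ha0 hau (by linarith [hα.1])) hΓ0.le
    have hlt : ∫ u in Ioi (0:ℝ), f (Real.exp (-u)) * (Real.exp (-u) * (u ^ (-α) / Γ)) < r * I :=
      lt_of_le_of_lt hJ (mul_lt_mul_of_pos_right ha hI)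
    filter_upwards [(key f hf).eventually (gt_mem_nhds hlt), eventually_gt_atTop 0] with t h ht
    have h2 : g t / H (1 / t) * I ≤
        ∫ u in Ioi (0:ℝ), f (Real.exp (-u)) * (Real.exp (-u) * (g (t * u) / H (1 / t))) := by
      rw [hIdef, ← bump_const]
      refine bump_le f hf hf0 a 1 hsupp _ _ (hconst _) (hWi t ht) ?_
      intro u hu _ hu1
      exact div_le_div_of_nonneg_right (hgmono (mem_Ioi.2 (mul_pos ht hu)) (mem_Ioi.2 ht)
        (by nlinarith)) (hH _ (by positivity)).le
    exact lt_of_mul_lt_mul_right (h2.trans_lt h) hI.le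

/-- **Regular variation of the relaxation function.**
Let `Φ : (0,∞) → (0,∞)` be regularly varying at `0⁺` with index `α ∈ (0,1)`. Fix
`λ > 0` and let `g : (0,∞) → [0,∞)` be nonincreasing with Laplace transform
`∫₀^∞ e^{−zt} g(t) dt = Φ(z)/(z(λ + Φ(z)))` for all `z > 0`. Then `g` is regularly
varying at infinity with index `−α`. -/
theorem stmt7 (Φ : ℝ → ℝ) (α : ℝ) (hα : α ∈ Set.Ioo (0:ℝ) 1)
    (hΦpos : ∀ z : ℝ, 0 < z → 0 < Φ z)
    (hΦrv : ∀ c : ℝ, 0 < c →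
      Tendsto (fun z => Φ (c * z) / Φ z) (nhdsWithin 0 (Set.Ioi 0))
        (nhds (c ^ α)))
    (lam : ℝ) (hlam : 0 < lam)
    (g : ℝ → ℝ) (hg0 : ∀ t : ℝ, 0 < t → 0 ≤ g t)
    (hgmono : AntitoneOn g (Set.Ioi 0))
    (hglap : ∀ z : ℝ, 0 < z →
      ∫ t in Set.Ioi (0:ℝ), Real.exp (-z * t) * g t = Φ z / (z * (lam + Φ z))) :
    ∀ c : ℝ, 0 < c →
      Tendsto (fun t => g (c * t) / g t) atTop (nhds (c ^ (-α))) := by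
  set H : ℝ → ℝ := fun z => Φ z / (lam + Φ z) with hHdef
  have hden : ∀ z, 0 < z → 0 < lam + Φ z := fun z hz => add_pos hlam (hΦpos z hz)
  have hH : ∀ z, 0 < z → 0 < H z := fun z hz => div_pos (hΦpos z hz) (hden z hz)
  have hL : ∀ z : ℝ, 0 < z → ∫ t in Ioi (0:ℝ), Real.exp (-z * t) * g t = H z / z := by
    intro z hz
    rw [hglap z hz, hHdef, div_div, mul_comm z]
  have hHmono : ∀ x y, 0 < x → x ≤ y → H x ≤ H y := by
    intro x y hx hxy
    have hy : 0 < y := hx.trans_le hxy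
    have h1 := lap_scale g H hH hL (1 / x) 1 (by positivity) one_pos
    have h2 := lap_scale g H hH hL (1 / y) 1 (by positivity) one_pos
    have e1 := h1.2
    have e2 := h2.2
    simp only [one_div_one_div, one_mul, div_one] at e1 e2
    rw [← e1, ← e2]
    refine setIntegral_mono_on (by simpa using h1.1) (by simpa using h2.1) measurableSet_Ioi ?_
    intro u hu
    have hu' : 0 < u := hu
    refine mul_le_mul_of_nonneg_left ?_ (Real.exp_pos _).le
    refine hgmono (mem_Ioi.2 (by positivity)) (mem_Ioi.2 (by positivity)) ?_
    exact mul_le_mul_of_nonneg_right (one_div_le_one_div_of_le hx hxy) hu'.le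
  have hΦmono : MonotoneOn Φ (Ioi 0) := by
    intro x hx y hy hxy
    have h := hHmono x y hx hxy
    simp only [hHdef] at h
    rw [div_le_div_iff₀ (hden x hx) (hden y hy)] at h
    have : lam * Φ x ≤ lam * Φ y := by nlinarith
    exact le_of_mul_le_mul_left this hlam
  have hmul : ∀ c : ℝ, 0 < c → Tendsto (fun z : ℝ => c * z) (nhdsWithin 0 (Ioi 0))
      (nhdsWithin 0 (Ioi 0)) := by
    intro c hc
    refine tendsto_nhdsWithin_iff.2 ⟨?_, ?_⟩
    · have : Tendsto (fun z : ℝ => c * z) (nhds 0) (nhds (c * 0)) :=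
        (continuous_const.mul continuous_id).tendsto 0
      rw [mul_zero] at this
      exact this.mono_left nhdsWithin_le_nhds
    · filter_upwards [self_mem_nhdsWithin] with z hz using mul_pos hc hz
  have hΦ0 : Tendsto Φ (nhdsWithin 0 (Ioi 0)) (nhds 0) := by
    have h := hΦmono.tendsto_nhdsGT (x := (0:ℝ)) ⟨0, by
      rintro _ ⟨z, hz, rfl⟩; exact (hΦpos z hz).le⟩
    set L := sInf (Φ '' Ioi 0) with hLdef
    by_cases hL0 : L = 0
    · rwa [hL0] at h
    · exfalso
      have h2 := (h.comp (hmul 2 two_pos)).div h hL0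
      have h3 := tendsto_nhds_unique h2 (hΦrv 2 two_pos)
      rw [div_self hL0] at h3
      have := Real.one_lt_rpow (x := 2) (z := α) (by norm_num) hα.1
      linarith
  have hHrv : ∀ c : ℝ, 0 < c →
      Tendsto (fun z => H (c * z) / H z) (nhdsWithin 0 (Ioi 0)) (nhds (c ^ α)) := by
    intro c hc
    have h1 := (hΦ0.const_add lam).div ((hΦ0.comp (hmul c hc)).const_add lam) (by simpa using hlam.ne')
    have h2 := (hΦrv c hc).mul h1
    rw [add_zero, div_self hlam.ne', mul_one] at h2
    refine h2.congr' ?_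
    filter_upwards [self_mem_nhdsWithin] with z hz
    have a1 := (hden z hz).ne'
    have a2 := (hden (c * z) (mul_pos hc hz)).ne'
    have a3 := (hΦpos z hz).ne'
    simp only [hHdef, Function.comp, Pi.div_apply]
    field_simp
  have hinv : Tendsto (fun t : ℝ => 1 / t) atTop (nhdsWithin 0 (Ioi 0)) := by
    simpa only [one_div] using tendsto_inv_atTop_nhdsGT_zero (𝕜 := ℝ)
  have hK := tauber g H α hα hH hg0 hgmono hL (fun c hc => (hHrv c hc).comp hinv)
  intro c hc
  have hκ : 1 / Real.Gamma (1 - α) ≠ 0 :=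
    (one_div_pos.2 (Real.Gamma_pos_of_pos (by linarith [hα.2]))).ne'
  have hct : Tendsto (fun t : ℝ => c * t) atTop atTop := tendsto_id.const_mul_atTop hc
  have h1 := ((hK.comp hct).div hK hκ).mul ((hHrv c⁻¹ (inv_pos.2 hc)).comp hinv)
  rw [div_self hκ, one_mul, Real.inv_rpow hc.le, ← Real.rpow_neg hc.le] at h1
  refine h1.congr' ?_
  filter_upwards [eventually_gt_atTop 0] with t ht
  have b1 := (hH (1 / t) (by positivity)).ne'
  have b2 := (hH (1 / (c * t)) (by positivity)).ne'
  have e : c⁻¹ * (1 / t) = 1 / (c * t) := by field_simp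
  simp only [Function.comp, Pi.div_apply, e]
  rw [div_div_div_eq, div_mul_div_comm]
  by_cases hgt : g t = 0
  · simp [hgt]
  · field_simp
end
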